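/- arXiv:2502.15685 — 3 statements merged into one kernel-verified Lean document; each statement's English description precedes it below -/
import Mathlib

section
/- Let k* be an integer with m < k* ≤ N. For every combination c = (c_ef, c_si, c_in) ∈ Δ(k_ef,k_si,k_in) such that c_ef(s) = 1 for every s with m < s ≤ N (so the k_ef effective positions are exactly {m+1,…,N}), one has z(p*, c) = Γ(k*); in particular this value does not depend on how the similar and incorrect indicators are arranged within {1,…,m}. -/
open Finset

noncomputable def Hfun (gef gsi gin : ℕ → ℝ) (m k : ℕ) : ℝ :=
  (∑ s ∈ Finset.Icc 1 (min k m), 1 / (gsi s + gin s)) +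
    ∑ s ∈ Finset.Icc (m + 1) k, 1 / (gef s + gin s)

noncomputable def Gfun (gef gsi gin : ℕ → ℝ) (m k : ℕ) : ℝ :=
  (∑ s ∈ Finset.Icc 1 (min k m), gsi s / (gsi s + gin s)) +
    ∑ s ∈ Finset.Icc (m + 1) k, gef s / (gef s + gin s)

noncomputable def Gam (gef gsi gin : ℕ → ℝ) (kef ksi N m k : ℕ) : ℝ :=
  ((kef : ℝ) + (ksi : ℝ) - (N : ℝ) + Gfun gef gsi gin m k) / Hfun gef gsi gin m k

noncomputable def pstar (gef gsi gin : ℕ → ℝ) (m kstar s : ℕ) : ℝ :=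
  if s ≤ m then 1 / (Hfun gef gsi gin m kstar * (gsi s + gin s))
  else if s ≤ kstar then 1 / (Hfun gef gsi gin m kstar * (gef s + gin s))
  else 0

noncomputable def chatEf (gef gsi gin : ℕ → ℝ) (kef ksi N m kstar s : ℕ) : ℝ :=
  if s ≤ m then 0
  else if s ≤ kstar then
    (Gam gef gsi gin kef ksi N m kstar + gin s) / (gef s + gin s)
  else
    ((kef : ℝ) - ∑ u ∈ Finset.Icc (m + 1) kstar,
        (Gam gef gsi gin kef ksi N m kstar + gin u) / (gef u + gin u)) /
      ((N : ℝ) - (kstar : ℝ))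

noncomputable def chatSi (gef gsi gin : ℕ → ℝ) (kef ksi N m kstar s : ℕ) : ℝ :=
  if s ≤ m then
    (Gam gef gsi gin kef ksi N m kstar + gin s) / (gsi s + gin s)
  else if s ≤ kstar then 0
  else
    ((ksi : ℝ) - ∑ u ∈ Finset.Icc 1 m,
        (Gam gef gsi gin kef ksi N m kstar + gin u) / (gsi u + gin u)) /
      ((N : ℝ) - (kstar : ℝ))

noncomputable def chatIn (gef gsi gin : ℕ → ℝ) (kef ksi N m kstar s : ℕ) : ℝ :=
  1 - chatEf gef gsi gin kef ksi N m kstar s - chatSi gef gsi gin kef ksi N m kstar s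

noncomputable def zGain (gef gsi gin p cef csi cin : ℕ → ℝ) (N : ℕ) : ℝ :=
  ∑ s ∈ Finset.Icc 1 N, p s * (cef s * gef s + csi s * gsi s - cin s * gin s)

def memDelta (cef csi cin : ℕ → ℝ) (N kef ksi kin : ℕ) : Prop :=
  (∀ s ∈ Finset.Icc 1 N,
    (cef s = 0 ∨ cef s = 1) ∧ (csi s = 0 ∨ csi s = 1) ∧ (cin s = 0 ∨ cin s = 1) ∧
      cef s + csi s + cin s = 1) ∧
  (∑ s ∈ Finset.Icc 1 N, cef s) = (kef : ℝ) ∧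
  (∑ s ∈ Finset.Icc 1 N, csi s) = (ksi : ℝ) ∧
  (∑ s ∈ Finset.Icc 1 N, cin s) = (kin : ℝ)

def memDeltaT (cef csi cin : ℕ → ℝ) (N kef ksi kin : ℕ) : Prop :=
  (∀ s ∈ Finset.Icc 1 N,
    cef s ∈ Set.Icc (0 : ℝ) 1 ∧ csi s ∈ Set.Icc (0 : ℝ) 1 ∧ cin s ∈ Set.Icc (0 : ℝ) 1 ∧
      cef s + csi s + cin s = 1) ∧
  (∑ s ∈ Finset.Icc 1 N, cef s) = (kef : ℝ) ∧
  (∑ s ∈ Finset.Icc 1 N, csi s) = (ksi : ℝ) ∧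
  (∑ s ∈ Finset.Icc 1 N, cin s) = (kin : ℝ)

/-!
Let `g s` be `gsi s` for `s ≤ m` and `gef s` for `s > m`. Once the effective positions are
`{m + 1, …, N}`, the gain at `s` is `g s - cin s * (g s + gin s)`. The weight `pstar s` is
proportional to `1 / (g s + gin s)` for `s ≤ kstar`, so it turns the dependence on the arrangement
into the total `∑ cin s = kin`.
-/

theorem sum_Icc_one_ite_le {M : Type*} [AddCommMonoid M] (f g : ℕ → M) (m k : ℕ) :
    ∑ s ∈ Icc 1 k, (if s ≤ m then f s else g s) =
      ∑ s ∈ Icc 1 (min k m), f s + ∑ s ∈ Icc (m + 1) k, g s := by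
  have filter_le : {s ∈ Icc 1 k | s ≤ m} = Icc 1 (min k m) := by
    ext s
    simp only [mem_filter, mem_Icc]
    omega
  have filter_not_le : {s ∈ Icc 1 k | ¬s ≤ m} = Icc (m + 1) k := by
    ext s
    simp only [mem_filter, mem_Icc]
    omega
  rw [sum_ite, filter_le, filter_not_le]

/-- The gain at instance `s` when `s` is not incorrect, in an arrangement whose effective positions
are exactly those beyond `m`. -/
def correctGain (gef gsi : ℕ → ℝ) (m s : ℕ) : ℝ :=
  if s ≤ m then gsi s else gef s

theorem correctGain_add_pos {gef gsi gin : ℕ → ℝ} {m k s : ℕ}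
    (hsi : ∀ s ∈ Icc 1 m, 0 < gsi s + gin s) (hef : ∀ s ∈ Icc (m + 1) k, 0 < gef s + gin s)
    (hs : s ∈ Icc 1 k) : 0 < correctGain gef gsi m s + gin s := by
  obtain ⟨hs_pos, hsk⟩ := mem_Icc.1 hs
  unfold correctGain
  split_ifs with hsm
  · exact hsi s (mem_Icc.2 ⟨hs_pos, hsm⟩)
  · exact hef s (mem_Icc.2 ⟨by omega, hsk⟩)

section Weights

variable (gef gsi gin : ℕ → ℝ) {m k s : ℕ}

theorem Gfun_eq_sum_correctGain (m k : ℕ) :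
    Gfun gef gsi gin m k =
      ∑ s ∈ Icc 1 k, correctGain gef gsi m s / (correctGain gef gsi m s + gin s) := by
  rw [Gfun, ← sum_Icc_one_ite_le]
  refine sum_congr rfl fun s _ => ?_
  unfold correctGain
  split_ifs <;> rfl

theorem pstar_of_le (hs : s ≤ k) :
    pstar gef gsi gin m k s =
      1 / (Hfun gef gsi gin m k * (correctGain gef gsi m s + gin s)) := by
  unfold pstar correctGain
  split_ifs <;> rfl

theorem pstar_of_lt (hmk : m ≤ k) (hs : k < s) : pstar gef gsi gin m k s = 0 := by
  rw [pstar, if_neg (by omega), if_neg (by omega)]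

theorem zGain_pstar_eq_sum_Icc (cef csi cin : ℕ → ℝ) {N : ℕ} (hmk : m ≤ k) (hkN : k ≤ N) :
    zGain gef gsi gin (pstar gef gsi gin m k) cef csi cin N =
      ∑ s ∈ Icc 1 k, pstar gef gsi gin m k s *
        (cef s * gef s + csi s * gsi s - cin s * gin s) := by
  refine (sum_subset (Icc_subset_Icc_right hkN) fun s hsN hsk => ?_).symm
  rw [mem_Icc] at hsN hsk
  rw [pstar_of_lt gef gsi gin hmk (by omega), zero_mul]

end Weights

theorem memDelta.memDeltaT {cef csi cin : ℕ → ℝ} {N kef ksi kin : ℕ}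
    (hc : memDelta cef csi cin N kef ksi kin) : memDeltaT cef csi cin N kef ksi kin := by
  have mem_unitInterval {x : ℝ} (hx : x = 0 ∨ x = 1) : x ∈ Set.Icc (0 : ℝ) 1 := by
    rcases hx with rfl | rfl <;> simp
  refine ⟨fun s hs => ?_, hc.2⟩
  obtain ⟨hef, hsi, hin, htotal⟩ := hc.1 s hs
  exact ⟨mem_unitInterval hef, mem_unitInterval hsi, mem_unitInterval hin, htotal⟩

namespace memDeltaT

variable {cef csi cin : ℕ → ℝ} {N kef ksi kin m k s : ℕ}

theorem csi_eq_zero_of_cef_eq_one (hc : memDeltaT cef csi cin N kef ksi kin) (hs : s ∈ Icc 1 N)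
    (hef : cef s = 1) : csi s = 0 := by
  obtain ⟨-, hsi, hin, htotal⟩ := hc.1 s hs
  linarith [hsi.1, hin.1]

theorem cin_eq_zero_of_cef_eq_one (hc : memDeltaT cef csi cin N kef ksi kin) (hs : s ∈ Icc 1 N)
    (hef : cef s = 1) : cin s = 0 := by
  obtain ⟨-, hsi, hin, htotal⟩ := hc.1 s hs
  linarith [hsi.1, hin.1]

theorem cef_eq_zero_of_mem_Icc (hc : memDeltaT cef csi cin N kef ksi kin) (hN : m + kef = N)
    (hef : ∀ s, m < s → s ≤ N → cef s = 1) (hs : s ∈ Icc 1 m) : cef s = 0 := by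
  have hmN : m ≤ N := by omega
  have sum_tail : ∑ s ∈ Icc (m + 1) N, cef s = kef := by
    rw [sum_congr rfl fun s hs => hef s (mem_Icc.1 hs).1 (mem_Icc.1 hs).2]
    simp [← hN, add_right_comm m kef 1]
  have sum_head : ∑ s ∈ Icc 1 m, cef s = 0 := by
    have hsplit := sum_Icc_one_ite_le cef cef m N
    simp only [ite_self] at hsplit
    rw [min_eq_right hmN, hc.2.1, sum_tail] at hsplit
    linarith
  have cef_nonneg : ∀ s ∈ Icc 1 m, 0 ≤ cef s :=
    fun s hs => (hc.1 s (Icc_subset_Icc_right hmN hs)).1.1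
  exact (sum_eq_zero_iff_of_nonneg cef_nonneg).1 sum_head s hs

theorem sum_cin_Icc (hc : memDeltaT cef csi cin N kef ksi kin)
    (hef : ∀ s, m < s → s ≤ N → cef s = 1) (hmk : m ≤ k) (hkN : k ≤ N) :
    ∑ s ∈ Icc 1 k, cin s = kin := by
  rw [← hc.2.2.2]
  refine sum_subset (Icc_subset_Icc_right hkN) fun s hsN hsk =>
    hc.cin_eq_zero_of_cef_eq_one hsN ?_
  rw [mem_Icc] at hsN hsk
  exact hef s (by omega) hsN.2

theorem gain_eq_correctGain_sub (gef gsi gin : ℕ → ℝ)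
    (hc : memDeltaT cef csi cin N kef ksi kin) (hN : m + kef = N)
    (hef : ∀ s, m < s → s ≤ N → cef s = 1) (hs : s ∈ Icc 1 N) :
    cef s * gef s + csi s * gsi s - cin s * gin s =
      correctGain gef gsi m s - cin s * (correctGain gef gsi m s + gin s) := by
  obtain ⟨hs_pos, hsN⟩ := mem_Icc.1 hs
  rcases le_or_gt s m with hsm | hms
  · have hcef : cef s = 0 := hc.cef_eq_zero_of_mem_Icc hN hef (mem_Icc.2 ⟨hs_pos, hsm⟩)
    have hcsi : csi s = 1 - cin s := by linarith [(hc.1 s hs).2.2.2]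
    rw [correctGain, if_pos hsm, hcef, hcsi]
    ring
  · have hcef : cef s = 1 := hef s hms hsN
    rw [correctGain, if_neg hms.not_ge, hcef, hc.csi_eq_zero_of_cef_eq_one hs hcef,
      hc.cin_eq_zero_of_cef_eq_one hs hcef]
    ring

theorem pstar_mul_gain_eq {gef gsi gin : ℕ → ℝ}
    (hc : memDeltaT cef csi cin N kef ksi kin) (hN : m + kef = N)
    (hef : ∀ s, m < s → s ≤ N → cef s = 1) (hs : s ∈ Icc 1 N) (hsk : s ≤ k)
    (hgain : correctGain gef gsi m s + gin s ≠ 0) :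
    pstar gef gsi gin m k s * (cef s * gef s + csi s * gsi s - cin s * gin s) =
      (correctGain gef gsi m s / (correctGain gef gsi m s + gin s) - cin s) /
        Hfun gef gsi gin m k := by
  rw [hc.gain_eq_correctGain_sub gef gsi gin hN hef hs, pstar_of_le gef gsi gin hsk,
    one_div_mul_eq_div, mul_comm (Hfun _ _ _ _ _), ← div_div, sub_div,
    mul_div_cancel_right₀ _ hgain]

end memDeltaT

theorem stmt_6_general
    (gef gsi gin : ℕ → ℝ) (N kef ksi kin m kstar : ℕ)
    (hm : m = ksi + kin) (hsum : kef + ksi + kin = N)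
    (hsi_pos : ∀ s ∈ Icc 1 m, 0 < gsi s + gin s)
    (hef_pos : ∀ s ∈ Icc (m + 1) kstar, 0 < gef s + gin s)
    (hk1 : m < kstar) (hk2 : kstar ≤ N)
    (cef csi cin : ℕ → ℝ)
    (hc : memDeltaT cef csi cin N kef ksi kin)
    (hef : ∀ s : ℕ, m < s → s ≤ N → cef s = 1) :
    zGain gef gsi gin (pstar gef gsi gin m kstar) cef csi cin N =
      Gam gef gsi gin kef ksi N m kstar := by
  have hkin : (kef : ℝ) + ksi - N = -kin := by
    rw [← hsum]
    push_cast
    ring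
  calc zGain gef gsi gin (pstar gef gsi gin m kstar) cef csi cin N
      = ∑ s ∈ Icc 1 kstar, pstar gef gsi gin m kstar s *
          (cef s * gef s + csi s * gsi s - cin s * gin s) :=
        zGain_pstar_eq_sum_Icc gef gsi gin cef csi cin hk1.le hk2
    _ = ∑ s ∈ Icc 1 kstar, (correctGain gef gsi m s / (correctGain gef gsi m s + gin s) - cin s) /
          Hfun gef gsi gin m kstar :=
        sum_congr rfl fun s hs =>
          hc.pstar_mul_gain_eq (by omega) hef (Icc_subset_Icc_right hk2 hs) (mem_Icc.1 hs).2
            (correctGain_add_pos hsi_pos hef_pos hs).ne'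
    _ = (Gfun gef gsi gin m kstar - kin) / Hfun gef gsi gin m kstar := by
        rw [← sum_div, sum_sub_distrib, hc.sum_cin_Icc hef hk1.le hk2, Gfun_eq_sum_correctGain]
    _ = Gam gef gsi gin kef ksi N m kstar := by
        rw [Gam, hkin, neg_add_eq_sub]

theorem stmt_6
    (gef gsi gin : ℕ → ℝ) (N kef ksi kin m kstar : ℕ)
    (hN : 0 < N) (hm : m = ksi + kin) (hsum : kef + ksi + kin = N)
    (hgef : ∀ s ∈ Finset.Icc 1 N, 0 < gef s)
    (hgsi : ∀ s ∈ Finset.Icc 1 N, 0 < gsi s)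
    (hgin : ∀ s ∈ Finset.Icc 1 N, 0 < gin s)
    (hsilt : ∀ s ∈ Finset.Icc 1 N, gsi s < gef s)
    (hinlt : ∀ s ∈ Finset.Icc 1 N, gin s < gef s)
    (hdec : ∀ s ∈ Finset.Icc 1 N, ∀ t ∈ Finset.Icc 1 N, s < t → gef t < gef s)
    (hk1 : m < kstar) (hk2 : kstar ≤ N)
    (cef csi cin : ℕ → ℝ)
    (hc : memDelta cef csi cin N kef ksi kin)
    (hef : ∀ s : ℕ, m < s → s ≤ N → cef s = 1) :
    zGain gef gsi gin (pstar gef gsi gin m kstar) cef csi cin N =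
      Gam gef gsi gin kef ksi N m kstar := by
  have Icc_one_m_subset : Icc 1 m ⊆ Icc 1 N := Icc_subset_Icc_right (by omega)
  have Icc_m_kstar_subset : Icc (m + 1) kstar ⊆ Icc 1 N := Icc_subset_Icc (by omega) hk2
  exact stmt_6_general gef gsi gin N kef ksi kin m kstar hm hsum
    (fun s hs => add_pos (hgsi s (Icc_one_m_subset hs)) (hgin s (Icc_one_m_subset hs)))
    (fun s hs => add_pos (hgef s (Icc_m_kstar_subset hs)) (hgin s (Icc_m_kstar_subset hs)))
    hk1 hk2 cef csi cin hc.memDeltaT hef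
end

section
/- Let k* be an integer with m < k* < N. For every probability vector p (p(s) ≥ 0 for all s and ∑_{s=1}^N p(s) = 1), the expected gain of the combination ĉ decomposes as z(p, ĉ) = Γ(k*)·∑_{s=1}^{k*} p(s) + ∑_{s=k*+1}^{N} p(s)·t(s), where t(s) = ĉ_ef(s)·(g_ef(s)+g_in(s)) + ĉ_si(s)·(g_si(s)+g_in(s)) − g_in(s). -/
open Finset

/-!
Eliminating `cin s = 1 - cef s - csi s` turns the payoff at `s` into
`cef s * (gef s + gin s) + csi s * (gsi s + gin s) - gin s`. For `s ≤ kstar` one of `chatEf s`,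
`chatSi s` vanishes, and the other is chosen to make this payoff equal to `Γ(kstar)`.
-/

theorem zGain_eq_sum_of_sum_eq_one {gef gsi gin p cef csi cin : ℕ → ℝ} {N : ℕ}
    (hc : ∀ s ∈ Icc 1 N, cef s + csi s + cin s = 1) :
    zGain gef gsi gin p cef csi cin N =
      ∑ s ∈ Icc 1 N, p s * (cef s * (gef s + gin s) + csi s * (gsi s + gin s) - gin s) := by
  refine sum_congr rfl fun s hs ↦ ?_
  rw [eq_sub_of_add_eq' (hc s hs)]
  ring

theorem sum_Icc_add_sum_Icc_add_one {M : Type*} [AddCommMonoid M] (f : ℕ → M) {a k N : ℕ}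
    (hak : a ≤ k + 1) (hkN : k ≤ N) :
    ∑ s ∈ Icc a k, f s + ∑ s ∈ Icc (k + 1) N, f s = ∑ s ∈ Icc a N, f s := by
  simp only [← Ico_add_one_right_eq_Icc]
  exact sum_Ico_consecutive f hak (Nat.add_le_add_right hkN 1)

section Combination

variable (gef gsi gin : ℕ → ℝ) (kef ksi N : ℕ) {m kstar s : ℕ}

theorem chatEf_add_chatSi_add_chatIn (m kstar s : ℕ) :
    chatEf gef gsi gin kef ksi N m kstar s + chatSi gef gsi gin kef ksi N m kstar s +
      chatIn gef gsi gin kef ksi N m kstar s = 1 := by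
  rw [chatIn]
  ring

theorem chat_payoff_eq_Gam_of_le (kstar : ℕ) (hsm : s ≤ m) (hsi : gsi s + gin s ≠ 0) :
    chatEf gef gsi gin kef ksi N m kstar s * (gef s + gin s) +
      chatSi gef gsi gin kef ksi N m kstar s * (gsi s + gin s) - gin s =
      Gam gef gsi gin kef ksi N m kstar := by
  rw [chatEf, chatSi, if_pos hsm, if_pos hsm, div_mul_cancel₀ _ hsi]
  ring

theorem chat_payoff_eq_Gam_of_lt_of_le (hms : m < s) (hsk : s ≤ kstar)
    (hef : gef s + gin s ≠ 0) :
    chatEf gef gsi gin kef ksi N m kstar s * (gef s + gin s) +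
      chatSi gef gsi gin kef ksi N m kstar s * (gsi s + gin s) - gin s =
      Gam gef gsi gin kef ksi N m kstar := by
  rw [chatEf, chatSi, if_neg hms.not_ge, if_pos hsk, if_neg hms.not_ge, if_pos hsk,
    div_mul_cancel₀ _ hef]
  ring

end Combination

theorem stmt_8_general
    (gef gsi gin : ℕ → ℝ) (N kef ksi m kstar : ℕ) (p : ℕ → ℝ) (hkN : kstar ≤ N)
    (hsi : ∀ s ∈ Icc 1 kstar, s ≤ m → gsi s + gin s ≠ 0)
    (hef : ∀ s ∈ Icc 1 kstar, m < s → gef s + gin s ≠ 0) :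
    zGain gef gsi gin p (chatEf gef gsi gin kef ksi N m kstar)
        (chatSi gef gsi gin kef ksi N m kstar)
        (chatIn gef gsi gin kef ksi N m kstar) N =
      Gam gef gsi gin kef ksi N m kstar * (∑ s ∈ Icc 1 kstar, p s) +
        ∑ s ∈ Icc (kstar + 1) N,
          p s *
            (chatEf gef gsi gin kef ksi N m kstar s * (gef s + gin s) +
              chatSi gef gsi gin kef ksi N m kstar s * (gsi s + gin s) - gin s) := by
  rw [zGain_eq_sum_of_sum_eq_one fun s _ ↦
      chatEf_add_chatSi_add_chatIn gef gsi gin kef ksi N m kstar s,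
    ← sum_Icc_add_sum_Icc_add_one _ (Nat.le_add_left 1 kstar) hkN,
    mul_comm (Gam gef gsi gin kef ksi N m kstar), sum_mul]
  congr 1
  refine sum_congr rfl fun s hs ↦ congrArg (p s * ·) ?_
  rcases le_or_gt s m with hsm | hms
  · exact chat_payoff_eq_Gam_of_le gef gsi gin kef ksi N kstar hsm (hsi s hs hsm)
  · exact chat_payoff_eq_Gam_of_lt_of_le gef gsi gin kef ksi N hms (mem_Icc.mp hs).2
      (hef s hs hms)

theorem stmt_8
    (gef gsi gin : ℕ → ℝ) (N kef ksi kin m kstar : ℕ)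
    (hN : 0 < N) (hm : m = ksi + kin) (hsum : kef + ksi + kin = N)
    (hgef : ∀ s ∈ Finset.Icc 1 N, 0 < gef s)
    (hgsi : ∀ s ∈ Finset.Icc 1 N, 0 < gsi s)
    (hgin : ∀ s ∈ Finset.Icc 1 N, 0 < gin s)
    (hsilt : ∀ s ∈ Finset.Icc 1 N, gsi s < gef s)
    (hinlt : ∀ s ∈ Finset.Icc 1 N, gin s < gef s)
    (hdec : ∀ s ∈ Finset.Icc 1 N, ∀ t ∈ Finset.Icc 1 N, s < t → gef t < gef s)
    (hk1 : m < kstar) (hk2 : kstar < N)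
    (p : ℕ → ℝ) (hp : ∀ s ∈ Finset.Icc 1 N, 0 ≤ p s)
    (hp1 : (∑ s ∈ Finset.Icc 1 N, p s) = 1) :
    zGain gef gsi gin p (chatEf gef gsi gin kef ksi N m kstar)
        (chatSi gef gsi gin kef ksi N m kstar)
        (chatIn gef gsi gin kef ksi N m kstar) N =
      Gam gef gsi gin kef ksi N m kstar * (∑ s ∈ Finset.Icc 1 kstar, p s) +
        ∑ s ∈ Finset.Icc (kstar + 1) N,
          p s *
            (chatEf gef gsi gin kef ksi N m kstar s * (gef s + gin s) +
              chatSi gef gsi gin kef ksi N m kstar s * (gsi s + gin s) - gin s) :=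
  have hmem {s : ℕ} (hs : s ∈ Icc 1 kstar) : s ∈ Icc 1 N := Icc_subset_Icc_right hk2.le hs
  stmt_8_general gef gsi gin N kef ksi m kstar p hk2.le
    (fun s hs _ ↦ (add_pos (hgsi s (hmem hs)) (hgin s (hmem hs))).ne')
    (fun s hs _ ↦ (add_pos (hgef s (hmem hs)) (hgin s (hmem hs))).ne')
end

section
/- Let k* be an integer with m < k* < N. For every s with k* < s ≤ N, if ĉ_si(s) ≥ 0, then t(s) := ĉ_ef(s)·(g_ef(s)+g_in(s)) + ĉ_si(s)·(g_si(s)+g_in(s)) − g_in(s) ≤ g_ef(s). -/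
open Finset

/-!
Since `Γ` solves `Γ * H = k_ef + k_si - N + G`, the coefficients `ĉ_ef + ĉ_si` of the instances
`1, …, k*` add up to `k_ef + k_si - (N - k*)`. The remaining mass `N - k*` is spread evenly over the
`N - k*` instances beyond `k*`, so there `ĉ_ef + ĉ_si = 1` and
`t(s) = g_ef(s) - ĉ_si(s) * (g_ef(s) - g_si(s))`.
-/

theorem sum_add_div_add {ι K : Type*} [Field K] (S : Finset ι) (γ : K) (a b : ι → K)
    (hab : ∀ u ∈ S, a u + b u ≠ 0) :
    ∑ u ∈ S, (γ + b u) / (a u + b u) =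
      γ * ∑ u ∈ S, 1 / (a u + b u) + #S - ∑ u ∈ S, a u / (a u + b u) := by
  rw [← nsmul_one, ← sum_const, mul_sum, ← sum_add_distrib, ← sum_sub_distrib]
  refine sum_congr rfl fun u hu => ?_
  have := hab u hu
  field_simp
  ring

theorem mul_add_mul_sub_eq_of_add_eq_one {R : Type*} [CommRing R] {x y : R} (hxy : x + y = 1)
    (a b c : R) : x * (a + c) + y * (b + c) - c = a - y * (a - b) := by
  linear_combination (a + c) * hxy

section

variable {gef gsi gin : ℕ → ℝ} {m k : ℕ}

theorem Hfun_pos (hsi : ∀ u ∈ Icc 1 m, 0 < gsi u + gin u)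
    (hef : ∀ u ∈ Icc (m + 1) k, 0 < gef u + gin u) (hmk : m ≤ k) (hk : 0 < k) :
    0 < Hfun gef gsi gin m k := by
  have hsi' : ∀ u ∈ Icc 1 m, 0 < 1 / (gsi u + gin u) := fun u hu => one_div_pos.2 (hsi u hu)
  have hef' : ∀ u ∈ Icc (m + 1) k, 0 < 1 / (gef u + gin u) := fun u hu => one_div_pos.2 (hef u hu)
  rw [Hfun, min_eq_right hmk]
  rcases hmk.eq_or_lt with rfl | hlt
  · exact add_pos_of_pos_of_nonneg (sum_pos hsi' (nonempty_Icc.2 hk))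
      (sum_nonneg fun u hu => (hef' u hu).le)
  · exact add_pos_of_nonneg_of_pos (sum_nonneg fun u hu => (hsi' u hu).le)
      (sum_pos hef' (nonempty_Icc.2 hlt))

theorem sum_add_sum_eq_mul_Hfun_add_sub_Gfun (hsi : ∀ u ∈ Icc 1 m, gsi u + gin u ≠ 0)
    (hef : ∀ u ∈ Icc (m + 1) k, gef u + gin u ≠ 0) (hmk : m ≤ k) (γ : ℝ) :
    ∑ u ∈ Icc (m + 1) k, (γ + gin u) / (gef u + gin u) +
        ∑ u ∈ Icc 1 m, (γ + gin u) / (gsi u + gin u) =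
      γ * Hfun gef gsi gin m k + k - Gfun gef gsi gin m k := by
  have hcard_si : (#(Icc 1 m) : ℝ) = m := by simp
  have hcard_ef : (#(Icc (m + 1) k) : ℝ) = k - m := by simp [Nat.cast_sub hmk]
  rw [sum_add_div_add _ γ gsi gin hsi, sum_add_div_add _ γ gef gin hef, hcard_si, hcard_ef,
    Hfun, Gfun, min_eq_right hmk]
  ring

variable {kef ksi N s : ℕ}

theorem Gam_mul_Hfun (hH : Hfun gef gsi gin m k ≠ 0) :
    Gam gef gsi gin kef ksi N m k * Hfun gef gsi gin m k =
      kef + ksi - N + Gfun gef gsi gin m k :=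
  div_mul_cancel₀ _ hH

theorem chatEf_of_lt (hmk : m ≤ k) (hs : k < s) :
    chatEf gef gsi gin kef ksi N m k s =
      (kef - ∑ u ∈ Icc (m + 1) k,
        (Gam gef gsi gin kef ksi N m k + gin u) / (gef u + gin u)) / (N - k) := by
  rw [chatEf, if_neg (hmk.trans_lt hs).not_ge, if_neg hs.not_ge]

theorem chatSi_of_lt (hmk : m ≤ k) (hs : k < s) :
    chatSi gef gsi gin kef ksi N m k s =
      (ksi - ∑ u ∈ Icc 1 m,
        (Gam gef gsi gin kef ksi N m k + gin u) / (gsi u + gin u)) / (N - k) := by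
  rw [chatSi, if_neg (hmk.trans_lt hs).not_ge, if_neg hs.not_ge]

theorem chatEf_add_chatSi_of_lt (hsi : ∀ u ∈ Icc 1 m, gsi u + gin u ≠ 0)
    (hef : ∀ u ∈ Icc (m + 1) k, gef u + gin u ≠ 0) (hH : Hfun gef gsi gin m k ≠ 0)
    (hmk : m ≤ k) (hkN : k ≠ N) (hs : k < s) :
    chatEf gef gsi gin kef ksi N m k s + chatSi gef gsi gin kef ksi N m k s = 1 := by
  have hNk : (N : ℝ) - k ≠ 0 := sub_ne_zero.2 (Nat.cast_injective.ne hkN.symm)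
  have hsum := sum_add_sum_eq_mul_Hfun_add_sub_Gfun hsi hef hmk (Gam gef gsi gin kef ksi N m k)
  rw [Gam_mul_Hfun hH] at hsum
  rw [chatEf_of_lt hmk hs, chatSi_of_lt hmk hs, ← add_div, div_eq_one_iff_eq hNk]
  linarith

end

theorem stmt_9_general {gef gsi gin : ℕ → ℝ} {N kef ksi m k s : ℕ}
    (hsi : ∀ u ∈ Icc 1 m, 0 < gsi u + gin u) (hef : ∀ u ∈ Icc (m + 1) k, 0 < gef u + gin u)
    (hmk : m ≤ k) (hk : 0 < k) (hkN : k < N) (hs : k < s) (hle : gsi s ≤ gef s)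
    (hc : 0 ≤ chatSi gef gsi gin kef ksi N m k s) :
    chatEf gef gsi gin kef ksi N m k s * (gef s + gin s) +
        chatSi gef gsi gin kef ksi N m k s * (gsi s + gin s) - gin s ≤ gef s := by
  have hH : Hfun gef gsi gin m k ≠ 0 := (Hfun_pos hsi hef hmk hk).ne'
  have hone : chatEf gef gsi gin kef ksi N m k s + chatSi gef gsi gin kef ksi N m k s = 1 :=
    chatEf_add_chatSi_of_lt (fun u hu => (hsi u hu).ne') (fun u hu => (hef u hu).ne') hH hmk
      hkN.ne hs
  rw [mul_add_mul_sub_eq_of_add_eq_one hone]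
  exact sub_le_self _ (mul_nonneg hc (sub_nonneg.2 hle))

theorem stmt_9
    (gef gsi gin : ℕ → ℝ) (N kef ksi kin m kstar : ℕ)
    (hN : 0 < N) (hm : m = ksi + kin) (hsum : kef + ksi + kin = N)
    (hgef : ∀ s ∈ Finset.Icc 1 N, 0 < gef s)
    (hgsi : ∀ s ∈ Finset.Icc 1 N, 0 < gsi s)
    (hgin : ∀ s ∈ Finset.Icc 1 N, 0 < gin s)
    (hsilt : ∀ s ∈ Finset.Icc 1 N, gsi s < gef s)
    (hinlt : ∀ s ∈ Finset.Icc 1 N, gin s < gef s)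
    (hdec : ∀ s ∈ Finset.Icc 1 N, ∀ t ∈ Finset.Icc 1 N, s < t → gef t < gef s)
    (hk1 : m < kstar) (hk2 : kstar < N)
     :
    ∀ s : ℕ, kstar < s → s ≤ N → 0 ≤ chatSi gef gsi gin kef ksi N m kstar s →
      chatEf gef gsi gin kef ksi N m kstar s * (gef s + gin s) +
          chatSi gef gsi gin kef ksi N m kstar s * (gsi s + gin s) - gin s ≤
        gef s := by
  intro s hs hsN
  exact stmt_9_general (by grind) (by grind) hk1.le (by lia) hk2 hs (by grind)
end
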